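/- Let H be a real Hilbert space, let 0 < c₁, c₂ < ∞ with c₁ ≠ c₂, let s ∈ {−1,1} and let J be a unitary operator on H. Then for every ε ∈ (0, min(c₁,c₂)) and all vectors w₁, w₂ ∈ M(H) with w₁ ≠ w₂, there exist λ ∈ (0,ε), a unit vector n ∈ H and a ∈ M(H) such that W_{λ,c₁}[s,n,J;a] w₁ = W_{λ,c₂}[s,n,J;a] w₂. -/

import Mathlib

open scoped InnerProductSpace

/-- Generalized Lorentz transform `W_{λ,c}[s,n,J]` on `M(H) = ℝ × H` (case `λ < ∞`, `c < ∞`). -/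
noncomputable def Wfin {H : Type*} [NormedAddCommGroup H] [InnerProductSpace ℝ H]
    (lam c s : ℝ) (n : H) (J : H ≃ₗᵢ[ℝ] H) (w : ℝ × H) : ℝ × H :=
  ((s * w.1 - lam / c ^ 2 * ⟪n, w.2⟫_ℝ) / Real.sqrt |1 - lam ^ 2 / c ^ 2|,
    J (((lam * w.1 - s * ⟪n, w.2⟫_ℝ) / Real.sqrt |1 - lam ^ 2 / c ^ 2|) • n
      + (w.2 - ⟪n, w.2⟫_ℝ • n)))

/-- Generalized Lorentz transform `W_{λ,∞}[s,n,J]` on `M(H) = ℝ × H` (case `c = ∞`). -/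
noncomputable def Wgal {H : Type*} [NormedAddCommGroup H] [InnerProductSpace ℝ H]
    (lam s : ℝ) (n : H) (J : H ≃ₗᵢ[ℝ] H) (w : ℝ × H) : ℝ × H :=
  (s * w.1, J ((lam * w.1 - s * ⟪n, w.2⟫_ℝ) • n + (w.2 - ⟪n, w.2⟫_ℝ • n)))

/-- Generalized Lorentz transform `W_{∞,c}[s,n,J]` on `M(H) = ℝ × H` (case `λ = ∞`). -/
noncomputable def Wtach {H : Type*} [NormedAddCommGroup H] [InnerProductSpace ℝ H]
    (c s : ℝ) (n : H) (J : H ≃ₗᵢ[ℝ] H) (w : ℝ × H) : ℝ × H :=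
  (-⟪n, w.2⟫_ℝ / c, J ((c * w.1) • n + (w.2 - ⟪n, w.2⟫_ℝ • n)))

/-!
Fix a unit vector `n` parallel to the spatial part of `w₁ - w₂`. Then `w₁` and `w₂` have the same
component orthogonal to `e₀` and `n`, on which both transforms act by `J`, and it remains to merge
their coordinates `v₁`, `v₂` along `e₀` and `n`. There `W_{λ,cᵢ}` acts by a 2 × 2 matrix `Bᵢ`, and
a translation `u` merging `v₁` with `v₂` is a solution of `(B₁ - B₂) u = B₂ v₂ - B₁ v₁`. With
`dᵢ = 1 - λ² / cᵢ²` and `rᵢ = √|dᵢ|`, the determinant of `B₁ - B₂` factors as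
`(1 / r₁ - 1 / r₂) (d₂ / r₂ - d₁ / r₁)`. Since `|dᵢ / rᵢ| = rᵢ`, it is nonzero as soon as
`r₁ ≠ r₂`.
-/

section BoostMatrix

/-- The matrix of `W_{λ,c}[s,n,J]` in its longitudinal coordinates: it maps the coordinates of `w`
along `(e₀, n)` to those of `W_{λ,c}[s,n,J] w` along `(e₀, J n)`. -/
noncomputable def boostMatrix (lam c s : ℝ) : Matrix (Fin 2) (Fin 2) ℝ :=
  (Real.sqrt |1 - lam ^ 2 / c ^ 2|)⁻¹ • !![s, -(lam / c ^ 2); lam, -s]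

theorem det_boostMatrix_sub {lam c₁ c₂ s : ℝ} (hs : s ^ 2 = 1) :
    (boostMatrix lam c₁ s - boostMatrix lam c₂ s).det =
      ((Real.sqrt |1 - lam ^ 2 / c₁ ^ 2|)⁻¹ - (Real.sqrt |1 - lam ^ 2 / c₂ ^ 2|)⁻¹) *
        ((1 - lam ^ 2 / c₂ ^ 2) / Real.sqrt |1 - lam ^ 2 / c₂ ^ 2| -
          (1 - lam ^ 2 / c₁ ^ 2) / Real.sqrt |1 - lam ^ 2 / c₁ ^ 2|) := by
  simp only [boostMatrix, Matrix.det_fin_two, Matrix.sub_apply, Matrix.smul_apply, Matrix.of_apply,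
    Matrix.cons_val', Matrix.cons_val_zero, Matrix.cons_val_one, Matrix.cons_val_fin_one,
    smul_eq_mul]
  generalize Real.sqrt |1 - lam ^ 2 / c₁ ^ 2| = r₁
  generalize Real.sqrt |1 - lam ^ 2 / c₂ ^ 2| = r₂
  linear_combination -(r₁⁻¹ - r₂⁻¹) ^ 2 * hs

theorem abs_div_sqrt_abs (x : ℝ) : |x / Real.sqrt (|x|)| = Real.sqrt |x| := by
  rw [abs_div, abs_of_nonneg (Real.sqrt_nonneg _), Real.div_sqrt]

theorem det_boostMatrix_sub_ne_zero {lam c₁ c₂ s : ℝ} (hs : s ^ 2 = 1)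
    (h : |1 - lam ^ 2 / c₁ ^ 2| ≠ |1 - lam ^ 2 / c₂ ^ 2|) :
    (boostMatrix lam c₁ s - boostMatrix lam c₂ s).det ≠ 0 := by
  have hsqrt : Real.sqrt |1 - lam ^ 2 / c₁ ^ 2| ≠ Real.sqrt |1 - lam ^ 2 / c₂ ^ 2| :=
    (Real.sqrt_inj (abs_nonneg _) (abs_nonneg _)).not.2 h
  rw [det_boostMatrix_sub hs]
  refine mul_ne_zero (sub_ne_zero.2 (inv_injective.ne hsqrt)) (sub_ne_zero.2 fun hdiv => hsqrt ?_)
  rw [← abs_div_sqrt_abs, ← hdiv, abs_div_sqrt_abs]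

theorem abs_one_sub_sq_div_sq_ne {lam c₁ c₂ : ℝ} (hlam : lam ≠ 0) (hc₁ : 0 < c₁) (hc₂ : 0 < c₂)
    (hcc : c₁ ≠ c₂) (hsum : lam ^ 2 / c₁ ^ 2 + lam ^ 2 / c₂ ^ 2 ≠ 2) :
    |1 - lam ^ 2 / c₁ ^ 2| ≠ |1 - lam ^ 2 / c₂ ^ 2| := by
  intro h
  rcases abs_eq_abs.1 h with heq | hneg
  · have hquot : lam ^ 2 / c₁ ^ 2 = lam ^ 2 / c₂ ^ 2 := sub_right_injective heq
    have hsq : c₁ ^ 2 = c₂ ^ 2 := by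
      simpa only [div_eq_mul_inv, mul_right_inj' (pow_ne_zero 2 hlam), inv_inj] using hquot
    exact hcc ((sq_eq_sq₀ hc₁.le hc₂.le).1 hsq)
  · exact hsum (by linarith)

end BoostMatrix

theorem exists_norm_eq_one_norm_smul_eq {E : Type*} [NormedAddCommGroup E] [NormedSpace ℝ E]
    [Nontrivial E] (x : E) : ∃ n : E, ‖n‖ = 1 ∧ ‖x‖ • n = x := by
  rcases eq_or_ne x 0 with rfl | hx
  · obtain ⟨n, hn⟩ := exists_norm_eq E zero_le_one
    exact ⟨n, hn, by rw [norm_zero, zero_smul]⟩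
  · exact ⟨NormedSpace.normalize x, NormedSpace.norm_normalize_eq_one_iff.2 hx,
      NormedSpace.norm_smul_normalize x⟩

section Merging

variable {H : Type*} [NormedAddCommGroup H] [InnerProductSpace ℝ H]

theorem sub_inner_smul_eq_of_smul_eq_sub {n x y : H} {r : ℝ} (hn : ‖n‖ = 1)
    (h : r • n = x - y) : x - ⟪n, x⟫_ℝ • n = y - ⟪n, y⟫_ℝ • n := by
  obtain rfl : x = r • n + y := sub_eq_iff_eq_add.1 h.symm
  rw [inner_add_right, real_inner_smul_right, real_inner_self_eq_norm_sq, hn]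
  module

/-- The coordinates of `w ∈ M(H)` along `e₀` and the spatial direction `n`. -/
noncomputable def longitudinalCoords (n : H) (w : ℝ × H) : Fin 2 → ℝ :=
  ![w.1, ⟪n, w.2⟫_ℝ]

theorem longitudinalCoords_add_smul {n : H} (hn : ‖n‖ = 1) (w : ℝ × H) (u : Fin 2 → ℝ) :
    longitudinalCoords n (w + (u 0, u 1 • n)) = longitudinalCoords n w + u := by
  ext i
  fin_cases i
  · simp [longitudinalCoords]
  · simp [longitudinalCoords, inner_add_right, real_inner_smul_right, hn]

theorem Wfin_eq_boostMatrix_mulVec (lam c s : ℝ) (n : H) (J : H ≃ₗᵢ[ℝ] H) (w : ℝ × H) :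
    Wfin lam c s n J w =
      ((boostMatrix lam c s).mulVec (longitudinalCoords n w) 0,
        J ((boostMatrix lam c s).mulVec (longitudinalCoords n w) 1 • n
          + (w.2 - ⟪n, w.2⟫_ℝ • n))) := by
  simp only [Wfin, boostMatrix, longitudinalCoords, Matrix.mulVec, Matrix.vec2_dotProduct,
    Matrix.smul_apply, Matrix.of_apply, Matrix.cons_val', Matrix.cons_val_zero,
    Matrix.cons_val_one, Matrix.cons_val_fin_one, smul_eq_mul]
  ring_nf

theorem exists_Wfin_add_eq_Wfin_add {lam c₁ c₂ s r : ℝ} {n : H} (J : H ≃ₗᵢ[ℝ] H) {w₁ w₂ : ℝ × H}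
    (hdet : (boostMatrix lam c₁ s - boostMatrix lam c₂ s).det ≠ 0) (hn : ‖n‖ = 1)
    (hr : r • n = w₁.2 - w₂.2) :
    ∃ a : ℝ × H, Wfin lam c₁ s n J (w₁ + a) = Wfin lam c₂ s n J (w₂ + a) := by
  have hunit : IsUnit (boostMatrix lam c₁ s - boostMatrix lam c₂ s) :=
    (Matrix.isUnit_iff_isUnit_det _).2 hdet.isUnit
  obtain ⟨u, hu⟩ := Matrix.mulVec_surjective_iff_isUnit.2 hunit
    ((boostMatrix lam c₂ s).mulVec (longitudinalCoords n w₂) -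
      (boostMatrix lam c₁ s).mulVec (longitudinalCoords n w₁))
  have hlong : (boostMatrix lam c₁ s).mulVec (longitudinalCoords n w₁ + u) =
      (boostMatrix lam c₂ s).mulVec (longitudinalCoords n w₂ + u) := by
    rw [Matrix.sub_mulVec, sub_eq_sub_iff_add_eq_add] at hu
    rw [Matrix.mulVec_add, Matrix.mulVec_add, add_comm, hu, add_comm]
  refine ⟨(u 0, u 1 • n), ?_⟩
  have htrans := sub_inner_smul_eq_of_smul_eq_sub (x := w₁.2 + u 1 • n) (y := w₂.2 + u 1 • n) hn
    (by rw [add_sub_add_right_eq_sub, hr])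
  rw [Wfin_eq_boostMatrix_mulVec, Wfin_eq_boostMatrix_mulVec, longitudinalCoords_add_smul hn,
    longitudinalCoords_add_smul hn, hlong, Prod.snd_add, Prod.snd_add, htrans]

theorem stmt5_general [Nontrivial H] {lam c₁ c₂ s : ℝ} (hlam : 0 < lam) (hc₁ : 0 < c₁)
    (hc₂ : 0 < c₂) (hcc : c₁ ≠ c₂) (_hlam₁ : lam ≠ c₁) (_hlam₂ : lam ≠ c₂)
    (hsum : lam ^ 2 / c₁ ^ 2 + lam ^ 2 / c₂ ^ 2 ≠ 2) (hs : s = 1 ∨ s = -1) (J : H ≃ₗᵢ[ℝ] H)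
    (w₁ w₂ : ℝ × H) :
    ∃ n : H, ‖n‖ = 1 ∧ ∃ a : ℝ × H,
      Wfin lam c₁ s n J (w₁ + a) = Wfin lam c₂ s n J (w₂ + a) := by
  obtain ⟨n, hn, hparallel⟩ := exists_norm_eq_one_norm_smul_eq (w₁.2 - w₂.2)
  have hdet : (boostMatrix lam c₁ s - boostMatrix lam c₂ s).det ≠ 0 :=
    det_boostMatrix_sub_ne_zero (sq_eq_one_iff.2 hs)
      (abs_one_sub_sq_div_sq_ne hlam.ne' hc₁ hc₂ hcc hsum)
  exact ⟨n, hn, exists_Wfin_add_eq_Wfin_add J hdet hn hparallel⟩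

end Merging

theorem sq_div_sq_lt_one {lam c : ℝ} (hlam : 0 ≤ lam) (h : lam < c) : lam ^ 2 / c ^ 2 < 1 := by
  rw [← div_pow]
  have hc : 0 < c := hlam.trans_lt h
  exact pow_lt_one₀ (div_nonneg hlam hc.le) ((div_lt_one hc).2 h) two_ne_zero

/-- Lemma on merging of distinct points, finite `c₁ ≠ c₂`: for every
`ε ∈ (0, min(c₁,c₂))` and all `w₁ ≠ w₂` in `M(H)` there exist `λ ∈ (0,ε)`, a unit vector
`n` and `a ∈ M(H)` with `W_{λ,c₁}[s,n,J;a] w₁ = W_{λ,c₂}[s,n,J;a] w₂`. -/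
theorem stmt5 {H : Type*} [NormedAddCommGroup H] [InnerProductSpace ℝ H] [CompleteSpace H]
    [Nontrivial H]
    (c₁ c₂ : ℝ) (hc₁ : 0 < c₁) (hc₂ : 0 < c₂) (hcc : c₁ ≠ c₂)
    (s : ℝ) (hs : s = 1 ∨ s = -1) (J : H ≃ₗᵢ[ℝ] H)
    (ε : ℝ) (hε : 0 < ε) (hε' : ε < min c₁ c₂)
    (w₁ w₂ : ℝ × H) (hw : w₁ ≠ w₂) :
    ∃ lam : ℝ, 0 < lam ∧ lam < ε ∧ ∃ n : H, ‖n‖ = 1 ∧ ∃ a : ℝ × H,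
      Wfin lam c₁ s n J (w₁ + a) = Wfin lam c₂ s n J (w₂ + a) := by
  obtain ⟨hε₁, hε₂⟩ : ε / 2 < c₁ ∧ ε / 2 < c₂ := lt_min_iff.1 ((half_lt_self hε).trans hε')
  have hsum := add_lt_add (sq_div_sq_lt_one (half_pos hε).le hε₁)
    (sq_div_sq_lt_one (half_pos hε).le hε₂)
  rw [one_add_one_eq_two] at hsum
  exact ⟨ε / 2, half_pos hε, half_lt_self hε,
    stmt5_general (half_pos hε) hc₁ hc₂ hcc hε₁.ne hε₂.ne hsum.ne hs J w₁ w₂⟩
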